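/- Fix n ≥ 2, H > 0, and search costs c_1,…,c_n ≥ 0. Let 𝓗_P be the class of all index-based mappings from [0,H]^n to ℝ (one mapping for each choice of indices r = (r_1,…,r_n) ∈ ℝ^n). Then there is a universal constant C > 0 such that Pdim(𝓗_P) ≤ C·n·log n. -/

import Mathlib

/-!
For fixed points `v^1, …, v^m`, the payoffs of the procedure with indices `r` on all of the points
depend on `r` only through finitely many data: the order in which boxes are opened, and for each
box `a` the sign of `r a` and the set of pairs `(j, i)` with `v^j_i < r a`
(`indexPayoff_eq_of_profile`; the stopping rule `max ≥ r a` unfolds into such comparisons).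
As `r a` varies, these sets form a chain of subsets of an `m * n`-element set, so each is
determined by its cardinality. Hence at most `n! * (4 * (m * n + 1)) ^ n` payoff vectors occur.
Shattering requires at least `2 ^ m` of them, and `2 ^ m ≤ (4 * n * (m * n + 1)) ^ n` gives
`m ≤ 20 * n * log n` (`le_of_two_pow_le`).
-/


open MeasureTheory Set Real
open scoped Classical ENNReal

noncomputable section

/-- Maximum of the first `k` entries of `u` (and `0`), i.e. the best value found after
opening the first `k` boxes (in the sorted order); equals the true maximum whenever the
entries are nonnegative and `k ≥ 1`. -/
def prefMax {n : ℕ} (u : Fin n → ℝ) (k : ℕ) : ℝ :=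
  (Finset.univ.filter fun a : Fin n => (a : ℕ) < k).fold max 0 u

/-- Sum of the first `k` entries of `u`: the cumulative cost of opening the first `k`
boxes (in the sorted order). -/
def prefSum {n : ℕ} (u : Fin n → ℝ) (k : ℕ) : ℝ :=
  ∑ a ∈ Finset.univ.filter (fun a : Fin n => (a : ℕ) < k), u a

/-- The number of boxes opened: the least `k ≥ 1` such that either all boxes are open or
the best value found among the first `k` boxes weakly exceeds the next index, where
`rs` and `ws` are the indices and values in sorted (descending-index) order. -/
def stopTime {n : ℕ} (rs ws : Fin n → ℝ) : ℕ :=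
  Nat.find (show ∃ k, k = n ∨ (1 ≤ k ∧ ∃ h : k < n, rs ⟨k, h⟩ ≤ prefMax ws k)
    from ⟨n, Or.inl rfl⟩)

/-- The index-based mapping with indices `r` and costs `c`: boxes are opened in descending
order of index (ties broken by box label, via `Tuple.sort`); if the largest index is
negative nothing is opened and the output is `0`; otherwise the procedure stops as soon as
the maximum opened value weakly exceeds the next index (or all boxes are open) and the
output is the maximum opened value minus the cumulative cost paid. -/
def indexPayoff {n : ℕ} (c r : Fin n → ℝ) (v : Fin n → ℝ) : ℝ :=
  if hn : 0 < n then
    let sp := Tuple.sort (fun i => -(r i))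
    if r (sp ⟨0, hn⟩) < 0 then 0
    else
      let k := stopTime (fun a => r (sp a)) (fun a => v (sp a))
      prefMax (fun a => v (sp a)) k - prefSum (fun a => c (sp a)) k
  else 0

/-- A family of points is pseudo-shattered by a class of real-valued functions if there are
witnesses such that every sign pattern is realized by some function in the class. -/
def PseudoShatters {X : Type*} {m : ℕ} (𝓗 : Set (X → ℝ)) (pts : Fin m → X) : Prop :=
  ∃ w : Fin m → ℝ, ∀ σ : Fin m → Bool, ∃ h ∈ 𝓗, ∀ j,
    if σ j then w j < h (pts j) else h (pts j) < w j

/-- The stopping time depends on the indices only through their comparisons with `0` and with the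
values, since `prefMax` is a maximum of `0` and some of the values. -/
lemma stopTime_congr {n : ℕ} {rs rs' ws : Fin n → ℝ}
    (h0 : ∀ a, rs a ≤ 0 ↔ rs' a ≤ 0) (h : ∀ a i, rs a ≤ ws i ↔ rs' a ≤ ws i) :
    stopTime rs ws = stopTime rs' ws := by
  have key : ∀ (k : ℕ) (a : Fin n), rs a ≤ prefMax ws k ↔ rs' a ≤ prefMax ws k := by
    intro k a
    unfold prefMax
    rw [Finset.le_fold_max, Finset.le_fold_max, h0 a]
    simp only [h]
  unfold stopTime
  simp only [key]

/-- The finite data about the indices `r` that determine the payoffs on all the points `pts`: the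
opening order and, for each box `a`, the number of pairs `(j, i)` with `pts j i < r a`, together
with the truth values of `r a < 0` and `r a ≤ 0`. -/
def profile {n m : ℕ} (pts : Fin m → Fin n → ℝ) (r : Fin n → ℝ) :
    Equiv.Perm (Fin n) × (Fin n → Fin (m * n + 1) × Bool × Bool) :=
  (Tuple.sort (fun i => -(r i)), fun a =>
    (⟨(Finset.univ.filter fun p : Fin m × Fin n => pts p.1 p.2 < r a).card, by
      refine Nat.lt_succ_of_le ((Finset.card_le_univ _).trans ?_)
      simp⟩, decide (r a < 0), decide (r a ≤ 0)))

/-- Sublevel sets `{p | f p < x}` form a chain, so two of them of equal cardinality coincide. -/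
lemma le_iff_of_card_eq {ι : Type*} [Fintype ι] (f : ι → ℝ) {x y : ℝ}
    (h : (Finset.univ.filter fun p => f p < x).card = (Finset.univ.filter fun p => f p < y).card)
    (p : ι) : x ≤ f p ↔ y ≤ f p := by
  have heq : (Finset.univ.filter fun p => f p < x) = (Finset.univ.filter fun p => f p < y) := by
    rcases le_total x y with hxy | hxy
    · refine Finset.eq_of_subset_of_card_le (fun q hq => ?_) h.ge
      simp only [Finset.mem_filter, Finset.mem_univ, true_and] at hq ⊢
      linarith
    · refine (Finset.eq_of_subset_of_card_le (fun q hq => ?_) h.le).symm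
      simp only [Finset.mem_filter, Finset.mem_univ, true_and] at hq ⊢
      linarith
  have := Finset.ext_iff.1 heq p
  simp only [Finset.mem_filter, Finset.mem_univ, true_and] at this
  rw [← not_lt, ← not_lt, this]

lemma indexPayoff_eq_of_profile {n m : ℕ} (c : Fin n → ℝ) (pts : Fin m → Fin n → ℝ)
    {r r' : Fin n → ℝ} (h : profile pts r = profile pts r') (j : Fin m) :
    indexPayoff c r (pts j) = indexPayoff c r' (pts j) := by
  simp only [profile, Prod.mk.injEq, funext_iff, Fin.mk.injEq, decide_eq_decide] at h
  obtain ⟨hs, ha⟩ := h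
  have hle : ∀ a i, r a ≤ pts j i ↔ r' a ≤ pts j i := fun a i =>
    le_iff_of_card_eq (fun p : Fin m × Fin n => pts p.1 p.2) (ha a).1 (j, i)
  unfold indexPayoff
  simp only [hs]
  split_ifs with hn h1 h2 h2
  · rfl
  · exact absurd ((ha _).2.1.1 h1) h2
  · exact absurd ((ha _).2.1.2 h2) h1
  · rw [stopTime_congr (fun a => (ha _).2.2) (fun a i => hle _ _)]
  · rfl

lemma card_profile_le (n m : ℕ) :
    Fintype.card (Equiv.Perm (Fin n) × (Fin n → Fin (m * n + 1) × Bool × Bool))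
      ≤ (4 * n * (m * n + 1)) ^ n := by
  have h := Nat.factorial_le_pow n
  simp only [Fintype.card_prod, Fintype.card_perm, Fintype.card_fin, Fintype.card_fun,
    Fintype.card_bool]
  calc n.factorial * ((m * n + 1) * (2 * 2)) ^ n
      ≤ n ^ n * ((m * n + 1) * (2 * 2)) ^ n := Nat.mul_le_mul_right _ h
    _ = (4 * n * (m * n + 1)) ^ n := by rw [← mul_pow]; congr 1; ring

/-- Taking logarithms with `m = n * t` reduces the claim to `t * log 2 ≤ 3 * log 2 + 3 * log n + log t`,
where `log t ≤ t / 4 - 1 + 2 * log 2` and `log 2 ≤ log n`. -/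
lemma le_of_two_pow_le {n m : ℕ} (hn : 2 ≤ n) (h : 2 ^ m ≤ (4 * n * (m * n + 1)) ^ n) :
    (m : ℝ) ≤ 20 * n * Real.log n := by
  have hn' : (2 : ℝ) ≤ n := by exact_mod_cast hn
  have hlog2 := Real.log_two_gt_d9
  have hlogn : Real.log 2 ≤ Real.log n := Real.log_le_log (by norm_num) hn'
  rcases Nat.eq_zero_or_pos m with rfl | hm
  · have : 0 ≤ Real.log n := by linarith
    simp only [Nat.cast_zero]
    positivity
  have hm' : (1 : ℝ) ≤ m := by exact_mod_cast hm
  have hR : (2 : ℝ) ^ m ≤ (4 * n * (m * n + 1)) ^ n := by exact_mod_cast h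
  obtain ⟨t, ht⟩ : ∃ t : ℝ, t = m / n := ⟨_, rfl⟩
  have htpos : 0 < t := by rw [ht]; positivity
  have hmt : (m : ℝ) = n * t := by rw [ht]; field_simp
  have h8 : (4 * n * (m * n + 1) : ℝ) ≤ 2 ^ 3 * n ^ 3 * t := by
    have e : (2 ^ 3 * n ^ 3 * t : ℝ) = 4 * n * (2 * (m * n)) := by rw [hmt]; ring
    rw [e]
    have : (1 : ℝ) ≤ m * n := by nlinarith
    gcongr
    linarith
  have hl : (m : ℝ) * Real.log 2 ≤ n * Real.log (2 ^ 3 * n ^ 3 * t) := by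
    rw [← Real.log_pow, ← Real.log_pow]
    exact Real.log_le_log (by positivity) (hR.trans (by gcongr))
  have hsplit : Real.log (2 ^ 3 * n ^ 3 * t) = 3 * Real.log 2 + 3 * Real.log n + Real.log t := by
    rw [Real.log_mul (by positivity) htpos.ne', Real.log_mul (by positivity) (by positivity),
      Real.log_pow, Real.log_pow]
    norm_num
  have hlt : Real.log t ≤ t / 4 - 1 + 2 * Real.log 2 := by
    have h1 := Real.log_le_sub_one_of_pos (show 0 < t / 4 by positivity)
    rw [Real.log_div htpos.ne' (by norm_num), show (4 : ℝ) = 2 ^ 2 by norm_num, Real.log_pow] at h1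
    norm_num at h1 ⊢
    linarith
  have hcancel : t * Real.log 2 ≤ 3 * Real.log 2 + 3 * Real.log n + Real.log t := by
    rw [hsplit, hmt, mul_assoc] at hl
    exact le_of_mul_le_mul_left hl (by linarith)
  have hfin : t ≤ 20 * Real.log n := by nlinarith
  calc (m : ℝ) = n * t := hmt
    _ ≤ n * (20 * Real.log n) := by gcongr
    _ = 20 * n * Real.log n := by ring

/-- The pseudo-dimension of the class of all index-based mappings on `[0,H]^n` is at most
`C · n · log n` for a universal constant `C`. -/
theorem pdim_indexBased_le :
    ∃ C : ℝ, 0 < C ∧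
      ∀ (n : ℕ), 2 ≤ n → ∀ (H : ℝ), 0 < H →
      ∀ c : Fin n → ℝ, (∀ i, 0 ≤ c i) →
      ∀ m : ℕ, ∀ pts : Fin m → Fin n → ℝ,
        (∀ l : Fin m, ∀ i : Fin n, pts l i ∈ Icc 0 H) →
        PseudoShatters {h | ∃ r : Fin n → ℝ, h = indexPayoff c r} pts →
        (m : ℝ) ≤ C * n * Real.log n := by
  refine ⟨20, by norm_num, fun n hn H _ c _ m pts _ hsh => ?_⟩
  obtain ⟨w, hw⟩ := hsh
  have hw' : ∀ σ : Fin m → Bool, ∃ r : Fin n → ℝ, ∀ j,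
      if σ j then w j < indexPayoff c r (pts j) else indexPayoff c r (pts j) < w j := by
    intro σ
    obtain ⟨h, ⟨r, rfl⟩, hr⟩ := hw σ
    exact ⟨r, hr⟩
  choose r hr using hw'
  have hinj : Function.Injective fun σ => profile pts (r σ) := by
    intro σ τ hστ
    funext j
    have hj := indexPayoff_eq_of_profile c pts hστ j
    have h1 := hr σ j
    have h2 := hr τ j
    rw [hj] at h1
    cases hs : σ j <;> cases ht : τ j <;> simp [hs, ht] at h1 h2 ⊢ <;> linarith
  have hcard := (Fintype.card_le_of_injective _ hinj).trans (card_profile_le n m)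
  refine le_of_two_pow_le hn ?_
  simpa using hcard

end
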